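/- (Lemma 5.) Let C, D, m_h, m_v be positive integers with C ≥ 2D, m_h > D, and m_v < m_v^N(C,D,m_h). Then ⌈m_h/D⌉ > ⌊m_v/D⌋; in the paper's notation, m_{h;0} > m_{v;p₀}, where m_{v;p₀} = ⌊m_v/D⌋. -/

import Mathlib

open Finset

/-- The `p`-th polyphase length `⌈(m - p)/D⌉`. -/
def polyLen (D m p : ℕ) : ℤ := ⌈((m : ℚ) - (p : ℚ)) / (D : ℚ)⌉

/-- The necessary-length condition: `⌊m_v/D⌋ ≥ 1` and
`∑_{p=0}^{D-1} ⌊(m_{h;p} - 1)/⌊m_v/D⌋⌋ ≤ C - D`. -/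
def NecLenCond (C D mh mv : ℕ) : Prop :=
  1 ≤ mv / D ∧
    ∑ p ∈ Finset.range D, ⌊((polyLen D mh p : ℚ) - 1) / ((mv / D : ℕ) : ℚ)⌋
      ≤ (C : ℤ) - (D : ℤ)

/-- The necessary length `m_v^N(C,D,m_h)`. -/
noncomputable def mvN (C D mh : ℕ) : ℕ := sInf {mv : ℕ | NecLenCond C D mh mv}

/-- Lemma 5: if `C ≥ 2D`, `m_h > D` and `m_v < m_v^N(C,D,m_h)`, then
`m_{h;0} = ⌈m_h/D⌉ > ⌊m_v/D⌋ = m_{v;p₀}`. -/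
theorem mh0_gt_mvp0 (C D mh mv : ℕ) (hC : 0 < C) (hD : 0 < D)
    (hCD : 2 * D ≤ C) (hmh : D < mh) (hmvpos : 0 < mv) (hmv : mv < mvN C D mh) :
    ((mv / D : ℕ) : ℤ) < ⌈(mh : ℚ) / (D : ℚ)⌉ := by
  by_contra hcon
  push Not at hcon
  have hDq : (0 : ℚ) < (D : ℚ) := by exact_mod_cast hD
  have h1 : (1 : ℤ) < ⌈(mh : ℚ) / (D : ℚ)⌉ := by
    rw [Int.lt_ceil, lt_div_iff₀ hDq]
    push_cast
    rw [one_mul]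
    exact_mod_cast hmh
  have hk : 1 ≤ mv / D := by
    have : (1 : ℤ) < ((mv / D : ℕ) : ℤ) := lt_of_lt_of_le h1 hcon
    have h2 : 1 < mv / D := by exact_mod_cast this
    exact h2.le
  have hkq : (0 : ℚ) < ((mv / D : ℕ) : ℚ) := by exact_mod_cast hk
  have hcond : NecLenCond C D mh mv := by
    refine ⟨hk, ?_⟩
    have hs : ∑ p ∈ Finset.range D, ⌊((polyLen D mh p : ℚ) - 1) / ((mv / D : ℕ) : ℚ)⌋ ≤ 0 := by
      apply Finset.sum_nonpos
      intro p _
      have hp : polyLen D mh p ≤ ((mv / D : ℕ) : ℤ) := by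
        refine le_trans ?_ hcon
        unfold polyLen
        apply Int.ceil_le_ceil
        apply div_le_div_of_nonneg_right _ hDq.le
        have : (0 : ℚ) ≤ (p : ℚ) := Nat.cast_nonneg p
        linarith
      have hpq : (polyLen D mh p : ℚ) ≤ ((mv / D : ℕ) : ℚ) := by
        have h3 := (Int.cast_le (R := ℚ)).2 hp
        rwa [Int.cast_natCast] at h3
      rw [← Int.lt_add_one_iff, Int.floor_lt, div_lt_iff₀ hkq]
      rw [Int.cast_add, Int.cast_zero, Int.cast_one, zero_add, one_mul]
      linarith
    omega
  have hle : mvN C D mh ≤ mv := Nat.sInf_le hcond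
  omega
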